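/- There is an absolute constant C > 0 such that the following holds. Let f : {0,1}^n → {0,1} be a boolean function with sparsity spar(f) = r ≥ 2. Then the set system mon(f) of non-constant monomials of f has a hitting set H ⊆ [n] of size |H| ≤ C·(log₂ r)^5. -/

import Mathlib

/-- The coefficient of the monomial `s` in the unique multilinear polynomial computing
`f : {0,1}^n → ℝ` (subsets of `Fin n` identified with points of the cube),
given by Möbius inversion. -/
noncomputable def coeff {n : ℕ} (f : Finset (Fin n) → ℝ) (s : Finset (Fin n)) : ℝ :=
  ∑ t ∈ s.powerset, (-1 : ℝ) ^ (s.card - t.card) * f t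

/-- The sparsity of `f`: the number of nonzero coefficients. -/
noncomputable def sparsity {n : ℕ} (f : Finset (Fin n) → ℝ) : ℕ :=
  {s : Finset (Fin n) | coeff f s ≠ 0}.ncard

/-- The set system of non-constant monomials of `f`. -/
def mon {n : ℕ} (f : Finset (Fin n) → ℝ) : Set (Finset (Fin n)) :=
  {s | coeff f s ≠ 0 ∧ s ≠ ∅}

open Finset

lemma fact_sq_le (m j : ℕ) (h : j ≤ m) : (m.factorial)^2 ≤ (m+j).factorial * (m-j).factorial := by
  induction j with
  | zero => simp [sq]
  | succ j ih =>
    have ih := ih (by omega)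
    refine ih.trans ?_
    obtain ⟨a, rfl⟩ : ∃ a, m = j + 1 + a := ⟨m - (j+1), by omega⟩
    have e1 : j + 1 + a - j = a + 1 := by omega
    have e2 : j + 1 + a - (j+1) = a := by omega
    have e3 : j + 1 + a + (j+1) = (j+1+a+j) + 1 := by omega
    rw [e1, e2, e3, Nat.factorial_succ, Nat.factorial_succ]
    have : a + 1 ≤ j+1+a+j+1 := by omega
    calc _ = (a+1) * ((j+1+a+j).factorial * a.factorial) := by ring
      _ ≤ (j+1+a+j+1) * ((j+1+a+j).factorial * a.factorial) := Nat.mul_le_mul_right _ this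
      _ = _ := by ring

lemma prod_lower (j l : ℕ) (h : l + 1 ≤ j) :
    (∏ i ∈ Icc 1 l, |(i:ℝ)^2 - (j:ℝ)^2|) * ((j-1-l).factorial * j.factorial) =
      (j-1).factorial * (j+l).factorial := by
  induction l with
  | zero => simp
  | succ l ih =>
    have ih := ih (by omega)
    rw [Finset.prod_Icc_succ_top (by omega)]
    obtain ⟨a, rfl⟩ : ∃ a, j = l + 2 + a := ⟨j - (l+2), by omega⟩
    have e1 : l + 2 + a - 1 - l = a + 1 := by omega
    have e2 : l + 2 + a - 1 - (l+1) = a := by omega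
    rw [e1, Nat.factorial_succ] at ih
    rw [e2, ← add_assoc, Nat.factorial_succ (l+2+a+l)]
    have : |((l+1:ℕ):ℝ)^2 - ((l+2+a:ℕ):ℝ)^2| = ((a+1:ℕ):ℝ) * ((l+2+a+l+1:ℕ):ℝ) := by
      have h1 : (0:ℝ) ≤ l := by positivity
      have h2 : (0:ℝ) ≤ a := by positivity
      rw [abs_sub_comm, abs_of_nonneg]
      · push_cast; ring
      · push_cast; nlinarith
    rw [this]
    push_cast at ih ⊢
    linear_combination ((l+2+a+l+1:ℝ)) * ih

lemma prod_full (j m : ℕ) (hj : 1 ≤ j) (h : j ≤ m) :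
    (∏ i ∈ (Icc 1 m).erase j, |(i:ℝ)^2 - (j:ℝ)^2|) * (2 * j^2) =
      (m+j).factorial * (m-j).factorial := by
  induction m, h using Nat.le_induction with
  | base =>
    obtain ⟨a, rfl⟩ : ∃ a, j = a + 1 := ⟨j - 1, by omega⟩
    have := prod_lower (a+1) a le_rfl
    have e : (Icc 1 (a+1)).erase (a+1) = Icc 1 a := by ext x; simp only [mem_erase, mem_Icc]; omega
    rw [e]
    have e2 : a + 1 + (a + 1) = (a+1+a) + 1 := by omega
    rw [e2, Nat.factorial_succ (a+1+a)]
    rw [Nat.factorial_succ a] at this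
    simp at this ⊢
    have h0 : (a.factorial : ℝ) ≠ 0 := by positivity
    have h2 : (∏ i ∈ Icc 1 a, |(i:ℝ)^2 - ((a:ℝ)+1)^2|) * ((a:ℝ)+1) = ((a+1+a).factorial : ℝ) := by
      apply mul_left_cancel₀ h0
      linear_combination this
    linear_combination (2 * ((a:ℝ)+1)) * h2
  | succ m hm ih =>
    have e : (Icc 1 (m+1)).erase j = insert (m+1) ((Icc 1 m).erase j) := by
      ext x; simp only [mem_erase, mem_Icc, mem_insert]; omega
    rw [e, prod_insert (by simp)]
    obtain ⟨a, rfl⟩ : ∃ a, m = j + a := ⟨m - j, by omega⟩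
    have e1 : j + a + 1 - j = a + 1 := by omega
    have e2 : j + a - j = a := by omega
    have e3 : j + a + 1 + j = (j+a+j)+1 := by omega
    rw [e2] at ih
    rw [e1, e3, Nat.factorial_succ, Nat.factorial_succ]
    have : |((j+a+1:ℕ):ℝ)^2 - (j:ℝ)^2| = ((a+1:ℕ):ℝ) * ((j+a+j+1:ℕ):ℝ) := by
      have h1 : (0:ℝ) ≤ j := by positivity
      have h2 : (0:ℝ) ≤ a := by positivity
      rw [abs_of_nonneg]
      · push_cast; ring
      · push_cast; nlinarith
    rw [this]
    push_cast at ih ⊢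
    linear_combination ((a+1:ℝ)*(j+a+j+1)) * ih

lemma prod_bound (j m : ℕ) (hj : 1 ≤ j) (h : j ≤ m) :
    ∏ i ∈ (Icc 1 m).erase j, ((i:ℝ)^2 / |(i:ℝ)^2 - (j:ℝ)^2|) ≤ 2 := by
  rw [prod_div_distrib]
  have h1 := prod_full j m hj h
  have h2 : (∏ i ∈ (Icc 1 m).erase j, (i:ℝ)^2) * (j:ℝ)^2 = (m.factorial:ℝ)^2 := by
    rw [prod_erase_mul _ _ (by simp; omega), prod_pow]
    congr 1
    rw [← Nat.cast_prod, ← Finset.Ico_add_one_right_eq_Icc, Finset.prod_Ico_id_eq_factorial]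
  have h3 : ((m.factorial:ℝ))^2 ≤ (m+j).factorial * (m-j).factorial := by
    exact_mod_cast fact_sq_le m j h
  have hj2 : (0:ℝ) < (j:ℝ)^2 := by positivity
  have hpos : 0 < ∏ i ∈ (Icc 1 m).erase j, |(i:ℝ)^2 - (j:ℝ)^2| := by
    by_contra hc
    have : (0:ℝ) < (m+j).factorial * (m-j).factorial := by positivity
    nlinarith
  rw [div_le_iff₀ hpos]
  rw [← h1, ← h2] at h3
  nlinarith

open Polynomial in
lemma poly_bound (p : ℝ[X]) (d : ℕ) (hd : 1 ≤ d) (hp : p.natDegree ≤ d)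
    (hb : ∀ x ∈ Set.Icc (0:ℝ) 1, |p.eval x - p.eval 0| ≤ 1) : |p.coeff 1| ≤ 4 * (d:ℝ)^2 := by
  set h := p.divX with hh
  have hpe : ∀ x, p.eval x - p.eval 0 = x * h.eval x := by
    intro x
    have h1 := congrArg (eval x) p.divX_mul_X_add
    have h2 := congrArg (eval 0) p.divX_mul_X_add
    simp only [eval_add, eval_mul, eval_X, eval_C, mul_zero, zero_add] at h1 h2
    rw [← h1, ← h2, hh]; ring
  have hc : p.coeff 1 = h.eval 0 := by
    rw [← coeff_zero_eq_eval_zero, hh, coeff_divX]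
  have hdpos : (0:ℝ) < d := by positivity
  let v : ℕ → ℝ := fun i => (i:ℝ)^2 / (d:ℝ)^2
  have hinj : Set.InjOn v (Icc 1 d : Finset ℕ) := by
    intro a _ b _ hab
    simp only [v] at hab
    have : (a:ℝ)^2 = (b:ℝ)^2 := by
      field_simp at hab; exact hab
    have := (sq_eq_sq₀ (by positivity) (by positivity)).1 this
    exact_mod_cast this
  have hdeg : h.degree < #(Icc 1 d) := by
    refine (Polynomial.degree_le_natDegree).trans_lt ?_
    simp only [Nat.card_Icc, hh, natDegree_divX_eq_natDegree_tsub_one]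
    exact_mod_cast (by omega)
  have hint := Lagrange.eq_interpolate hinj hdeg
  have hev : h.eval 0 = ∑ j ∈ Icc 1 d, h.eval (v j) * (Lagrange.basis (Icc 1 d) v j).eval 0 := by
    conv_lhs => rw [hint]
    rw [Lagrange.interpolate_apply, eval_finsetSum]
    simp
  have hterm : ∀ j ∈ Icc 1 d, |h.eval (v j) * (Lagrange.basis (Icc 1 d) v j).eval 0|
      ≤ 2 * (d:ℝ)^2 * (1 / (j:ℝ)^2) := by
    intro j hj
    have hj' := Finset.mem_Icc.1 hj
    have hj0 : (0:ℝ) < j := by exact_mod_cast hj'.1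
    have hb' : |(Lagrange.basis (Icc 1 d) v j).eval 0| ≤ 2 := by
      refine le_trans (le_of_eq ?_) (prod_bound j d hj'.1 hj'.2)
      simp only [Lagrange.basis, Lagrange.basisDivisor, eval_prod, Finset.abs_prod]
      apply prod_congr rfl
      intro i hi
      have hij : (i:ℝ)^2 - (j:ℝ)^2 ≠ 0 := by
        intro h0
        have := (sq_eq_sq₀ (by positivity) (by positivity)).1 (sub_eq_zero.1 h0)
        simp at hi
        exact hi.1 (by exact_mod_cast this)
      simp only [eval_mul, eval_C, eval_sub, eval_X, v]
      rw [abs_mul, abs_inv, ← sub_div, abs_div, abs_sub_comm, zero_sub, abs_neg, abs_div]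
      have : |(i:ℝ)^2 - (j:ℝ)^2| ≠ 0 := abs_ne_zero.2 hij
      rw [abs_of_nonneg (by positivity : (0:ℝ) ≤ (i:ℝ)^2), abs_of_nonneg (by positivity : (0:ℝ) ≤ (d:ℝ)^2)]
      field_simp
    have hvpos : 0 < v j := by simp only [v]; positivity
    have hv1 : v j ≤ 1 := by
      simp only [v]
      rw [div_le_one (by positivity)]
      have : (j:ℝ) ≤ d := by exact_mod_cast hj'.2
      gcongr
    have h1 := hb (v j) ⟨hvpos.le, hv1⟩
    rw [hpe, abs_mul, abs_of_pos hvpos] at h1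
    have h2 : |h.eval (v j)| ≤ (d:ℝ)^2 * (1 / (j:ℝ)^2) := by
      have : |h.eval (v j)| ≤ 1 / v j := by
        rw [le_div_iff₀ hvpos]; linarith
      refine this.trans (le_of_eq ?_)
      simp only [v]; field_simp
    rw [abs_mul]
    have := mul_le_mul h2 hb' (abs_nonneg _) (by positivity)
    linarith
  have hsum : ∀ m : ℕ, 1 ≤ m → ∑ j ∈ Icc 1 m, 1 / (j:ℝ)^2 ≤ 2 - 1 / (m:ℝ) := by
    intro m hm
    induction m, hm using Nat.le_induction with
    | base => norm_num
    | succ m hm ih =>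
      rw [Finset.sum_Icc_succ_top (by omega)]
      have hm0 : (0:ℝ) < m := by exact_mod_cast hm
      have : 1 / ((m+1:ℕ):ℝ)^2 ≤ 1 / (m:ℝ) - 1/((m+1:ℕ):ℝ) := by
        push_cast
        rw [div_sub_div _ _ (by positivity) (by positivity), div_le_div_iff₀ (by positivity) (by positivity)]
        nlinarith
      linarith
  rw [hc, hev]
  refine (Finset.abs_sum_le_sum_abs _ _).trans ((Finset.sum_le_sum hterm).trans ?_)
  rw [← Finset.mul_sum]
  have h5 := hsum d hd
  have h6 : 0 < 1 / (d:ℝ) := by positivity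
  have : ∑ j ∈ Icc 1 d, 1 / (j:ℝ)^2 ≤ 2 := by linarith
  nlinarith [sq_nonneg (d:ℝ)]
lemma sum_between {κ : Type*} [DecidableEq κ] (T A : Finset κ) (h : T ⊆ A) (a b : ℝ) :
    ∑ y ∈ A.powerset, (if T ⊆ y then a ^ #y * b ^ #(A \ y) else 0) =
      a ^ #T * (a + b) ^ #(A \ T) := by
  have := Finset.prod_add (fun _ : κ => a) (fun i => if i ∈ T then 0 else b) A
  have e1 : ∏ i ∈ A, (a + if i ∈ T then 0 else b) = a ^ #T * (a + b) ^ #(A \ T) := by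
    rw [← Finset.prod_sdiff h, mul_comm]
    congr 1
    · rw [Finset.prod_congr rfl (g := fun _ => a)]
      · simp
      · intro x hx; simp [hx]
    · rw [Finset.prod_congr rfl (g := fun _ => a + b)]
      · simp
      · intro x hx; simp [(Finset.mem_sdiff.1 hx).2]
  rw [e1] at this
  rw [this]
  apply Finset.sum_congr rfl
  intro y hy
  rw [Finset.prod_const]
  split_ifs with hT
  · congr 1
    rw [Finset.prod_congr rfl (g := fun _ => b)]
    · simp
    · intro x hx
      have := (Finset.mem_sdiff.1 hx).2
      have h' : x ∉ T := fun h => this (hT h)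
      simp [h']
  · symm
    obtain ⟨x, hx, hxy⟩ := Finset.not_subset.1 hT
    rw [Finset.prod_eq_zero (i := x)]
    · simp
    · simp [h hx, hxy]
    · simp [hx]

open Polynomial in
lemma ns_bound {S κ : Type*} [DecidableEq κ] (M : Finset S) (c : S → ℝ) (τ : S → Finset κ)
    (g : Finset κ → ℝ) (A : Finset κ) (d : ℕ) (hd : 1 ≤ d)
    (hg : ∀ y ⊆ A, g y = ∑ s ∈ M, if τ s ⊆ y then c s else 0)
    (h01 : ∀ y ⊆ A, g y = 0 ∨ g y = 1)
    (hs : ∀ i ∈ A, g {i} ≠ g ∅)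
    (hdeg : ∀ s ∈ M, τ s ⊆ A → #(τ s) ≤ d) : #A ≤ 4 * d^2 := by
  classical
  set p : ℝ[X] := ∑ s ∈ M with τ s ⊆ A, C (c s) * X ^ #(τ s) with hp
  have heval : ∀ x, p.eval x = ∑ y ∈ A.powerset, x ^ #y * (1 - x) ^ #(A \ y) * g y := by
    intro x
    have : ∀ y ∈ A.powerset, x ^ #y * (1 - x) ^ #(A \ y) * g y =
        ∑ s ∈ M with τ s ⊆ A, c s * (if τ s ⊆ y then x ^ #y * (1 - x) ^ #(A \ y) else 0) := by
      intro y hy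
      rw [hg y (Finset.mem_powerset.1 hy), Finset.mul_sum, Finset.sum_filter]
      apply Finset.sum_congr rfl
      intro s _
      by_cases h1 : τ s ⊆ y
      · have : τ s ⊆ A := h1.trans (Finset.mem_powerset.1 hy)
        simp [h1, this, mul_comm]
      · simp [h1]
    rw [Finset.sum_congr rfl this, Finset.sum_comm, hp, eval_finsetSum]
    apply Finset.sum_congr rfl
    intro s hs
    rw [← Finset.mul_sum, sum_between _ _ (Finset.mem_filter.1 hs).2]
    simp
  have hnat : p.natDegree ≤ d := by
    apply natDegree_sum_le_of_forall_le
    intro s hs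
    rw [Finset.mem_filter] at hs
    exact (natDegree_C_mul_X_pow_le _ _).trans (hdeg s hs.1 hs.2)
  have hrange : ∀ x ∈ Set.Icc (0:ℝ) 1, 0 ≤ p.eval x ∧ p.eval x ≤ 1 := by
    intro x hx
    have hx0 : 0 ≤ x := hx.1
    have hx1 : 0 ≤ 1 - x := by linarith [hx.2]
    have hg01 : ∀ y ∈ A.powerset, 0 ≤ g y ∧ g y ≤ 1 := by
      intro y hy
      rcases h01 y (Finset.mem_powerset.1 hy) with h | h <;> rw [h] <;> norm_num
    rw [heval]
    constructor
    · exact Finset.sum_nonneg fun y hy => mul_nonneg (by positivity) (hg01 y hy).1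
    · have h1 := sum_between ∅ A (by simp) x (1 - x)
      simp at h1
      refine le_of_le_of_eq ?_ h1
      refine Finset.sum_le_sum fun y hy => ?_
      exact mul_le_of_le_one_right (by positivity) (hg01 y hy).2
  have hb : ∀ x ∈ Set.Icc (0:ℝ) 1, |p.eval x - p.eval 0| ≤ 1 := by
    intro x hx
    have h1 := hrange x hx
    have h2 := hrange 0 (by simp)
    rw [abs_le]; constructor <;> linarith
  have hmain := poly_bound p d hd hnat hb
  have hco : p.coeff 1 = ∑ i ∈ A, (g {i} - g ∅) := by
    have : ∀ i ∈ A, g {i} - g ∅ = ∑ s ∈ M, if τ s = {i} then c s else 0 := by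
      intro i hi
      rw [hg {i} (by simpa using hi), hg ∅ (by simp), ← Finset.sum_sub_distrib]
      apply Finset.sum_congr rfl
      intro s _
      simp only [Finset.subset_singleton_iff, Finset.subset_empty]
      by_cases h1 : τ s = ∅
      · simp [h1, eq_comm]
      · simp [h1]
    rw [Finset.sum_congr rfl this, Finset.sum_comm, hp, finsetSum_coeff, Finset.sum_filter]
    apply Finset.sum_congr rfl
    intro s _
    rw [coeff_C_mul_X_pow]
    by_cases h1 : #(τ s) = 1
    · obtain ⟨j, hj⟩ := Finset.card_eq_one.1 h1
      rw [hj]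
      simp
    · have : ∀ i, τ s ≠ {i} := by
        intro i hi; rw [hi] at h1; simp at h1
      simp [this, Ne.symm h1]
  have hco2 : p.coeff 1 = #A * (1 - 2 * g ∅) := by
    rw [hco, Finset.sum_congr rfl (g := fun _ => 1 - 2 * g ∅)]
    · simp only [sum_const, nsmul_eq_mul]
    · intro i hi
      have h1 := h01 {i} (by simpa using hi)
      have h2 := h01 ∅ (by simp)
      have h3 := hs i hi
      rcases h1 with h1 | h1 <;> rcases h2 with h2 | h2 <;> first | (exact absurd (h1.trans h2.symm) h3) | (rw [h1, h2]; norm_num)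
  have : |p.coeff 1| = #A := by
    rw [hco2, abs_mul]
    rcases h01 ∅ (by simp) with h | h <;> rw [h] <;> norm_num
  rw [this] at hmain
  exact_mod_cast hmain

lemma ns_bound2 {S κ : Type*} [DecidableEq κ] (M : Finset S) (c : S → ℝ) (τ : S → Finset κ)
    (g : Finset κ → ℝ) (G : Finset κ) (d : ℕ) (hd : 1 ≤ d) (hM : 2 * #M < 2 ^ d)
    (hg : ∀ y ⊆ G, g y = ∑ s ∈ M, if τ s ⊆ y then c s else 0)
    (h01 : ∀ y ⊆ G, g y = 0 ∨ g y = 1)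
    (hs : ∀ i ∈ G, g {i} ≠ g ∅) : #G ≤ 8 * d^2 := by
  classical
  have key : ∃ A ⊆ G, ∀ s ∈ M, (τ s ⊆ A → #(τ s) ≤ d) ∧ (τ s ⊆ G \ A → #(τ s) ≤ d) := by
    by_contra hcon
    push Not at hcon
    have hcov : G.powerset ⊆ {s ∈ M | τ s ⊆ G ∧ d < #(τ s)}.biUnion
        (fun s => Icc (τ s) G ∪ (Icc (τ s) G).image (fun A => G \ A)) := by
      intro A hA
      have hA := Finset.mem_powerset.1 hA
      obtain ⟨s, hsM, h⟩ := hcon A hA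
      simp only [Finset.mem_biUnion, Finset.mem_filter, Finset.mem_union, Finset.mem_image,
        Finset.mem_Icc]
      by_cases h1 : τ s ⊆ A ∧ d < #(τ s)
      · exact ⟨s, ⟨hsM, h1.1.trans hA, h1.2⟩, Or.inl ⟨h1.1, hA⟩⟩
      · have h2 := h (fun h3 => by by_contra h4; exact h1 ⟨h3, by omega⟩)
        exact ⟨s, ⟨hsM, h2.1.trans Finset.sdiff_subset, h2.2⟩,
          Or.inr ⟨G \ A, ⟨h2.1, Finset.sdiff_subset⟩, by rw [Finset.sdiff_sdiff_eq_self hA]⟩⟩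
    have hcard := (Finset.card_le_card hcov).trans Finset.card_biUnion_le
    rw [Finset.card_powerset] at hcard
    have h2 : ∀ s ∈ {s ∈ M | τ s ⊆ G ∧ d < #(τ s)},
        #(Icc (τ s) G ∪ (Icc (τ s) G).image (fun A => G \ A)) * 2 ^ d ≤ 2 * 2 ^ #G := by
      intro s hs
      have hs := Finset.mem_filter.1 hs
      have h3 : #(Icc (τ s) G) = 2 ^ (#G - #(τ s)) := Finset.card_Icc_finset hs.2.1
      have h4 := (Finset.card_union_le (Icc (τ s) G) ((Icc (τ s) G).image (fun A => G \ A)))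
      have h5 := Finset.card_image_le (s := Icc (τ s) G) (f := fun A => G \ A)
      have h6 := Finset.card_le_card hs.2.1
      calc _ ≤ (2 * 2 ^ (#G - #(τ s))) * 2 ^ d := Nat.mul_le_mul_right _ (by omega)
        _ = 2 * 2 ^ (#G - #(τ s) + d) := by rw [mul_assoc, ← pow_add]
        _ ≤ _ := by gcongr <;> omega
    have h3 : 2 ^ #G * 2 ^ d ≤ #M * (2 * 2 ^ #G) := by
      refine (Nat.mul_le_mul_right _ hcard).trans ?_
      rw [Finset.sum_mul]
      refine (Finset.sum_le_card_nsmul _ _ _ h2).trans ?_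
      rw [smul_eq_mul]
      exact Nat.mul_le_mul_right _ (Finset.card_filter_le _ _)
    have : 0 < 2 ^ #G := by positivity
    nlinarith
  obtain ⟨A, hA, hAs⟩ := key
  have b1 := ns_bound M c τ g A d hd (fun y hy => hg y (hy.trans hA)) (fun y hy => h01 y (hy.trans hA))
    (fun i hi => hs i (hA hi)) (fun s hs => (hAs s hs).1)
  have hB : G \ A ⊆ G := Finset.sdiff_subset
  have b2 := ns_bound M c τ g (G \ A) d hd (fun y hy => hg y (hy.trans hB))
    (fun y hy => h01 y (hy.trans hB))
    (fun i hi => hs i (hB hi)) (fun s hs => (hAs s hs).2)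
  have := Finset.card_sdiff_add_card_eq_card hA
  omega

lemma mbs_bound {κ : Type*} {n : ℕ} [DecidableEq κ] (f : Finset (Fin n) → ℝ) (M : Finset (Finset (Fin n)))
    (c : Finset (Fin n) → ℝ) (d : ℕ) (hd : 1 ≤ d) (hM : 2 * #M < 2 ^ d)
    (hf : ∀ x, f x = ∑ s ∈ M, if s ⊆ x then c s else 0)
    (h01 : ∀ x, f x = 0 ∨ f x = 1) (Z : Finset (Fin n)) (G : Finset κ) (B : κ → Finset (Fin n))
    (hB : ∀ i ∈ G, ∀ j ∈ G, i ≠ j → B i ∩ B j ⊆ Z)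
    (hs : ∀ i ∈ G, f (Z ∪ B i) ≠ f Z) : #G ≤ 8 * d^2 := by
  classical
  refine ns_bound2 {s ∈ M | s ⊆ Z ∪ G.biUnion B} c (fun s => {i ∈ G | ((s \ Z) ∩ B i).Nonempty})
    (fun y => f (Z ∪ y.biUnion B)) G d hd ?_ ?_ (fun _ _ => h01 _) ?_
  · have := Finset.card_filter_le M (fun s => s ⊆ Z ∪ G.biUnion B)
    omega
  · intro y hy
    rw [hf, Finset.sum_filter]
    apply Finset.sum_congr rfl
    intro s _
    rw [← ite_and]
    congr 1
    rw [eq_iff_iff]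
    constructor
    · intro h
      refine ⟨h.trans (Finset.union_subset_union_right (Finset.biUnion_subset_biUnion_of_subset_left _ hy)), ?_⟩
      intro i hi
      rw [Finset.mem_filter] at hi
      obtain ⟨hiG, x, hx⟩ := hi
      simp only [Finset.mem_inter, Finset.mem_sdiff] at hx
      have := h hx.1.1
      simp only [Finset.mem_union, hx.1.2, false_or, Finset.mem_biUnion] at this
      obtain ⟨j, hj, hxj⟩ := this
      by_cases hij : i = j
      · rwa [hij]
      · exact absurd (hB i hiG j (hy hj) hij (Finset.mem_inter.2 ⟨hx.2, hxj⟩)) hx.1.2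
    · rintro ⟨h1, h2⟩ x hx
      by_cases hz : x ∈ Z
      · simp [hz]
      · have := h1 hx
        simp only [Finset.mem_union, hz, false_or, Finset.mem_biUnion] at this ⊢
        obtain ⟨i, hi, hxi⟩ := this
        exact ⟨i, h2 (Finset.mem_filter.2 ⟨hi, x, by simp [hx, hz, hxi]⟩), hxi⟩
  · intro i hi
    simpa using hs i hi

/-- There is a base point and a nonempty finite family of sensitive blocks with all marginals at most `t`. -/
def QQ {n : ℕ} (f : Finset (Fin n) → ℝ) (t : ℝ) : Prop :=
  ∃ (Ω : Type) (_ : Fintype Ω) (_ : Nonempty Ω) (z : Finset (Fin n)) (w : Ω → Finset (Fin n)),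
    (∀ o, f (z ∪ w o) ≠ f z) ∧ ∀ x, (#{o | x ∈ w o} : ℝ) ≤ t * Fintype.card Ω

lemma QQ_of_finset {n : ℕ} (f : Finset (Fin n) → ℝ) (t : ℝ) {Ω : Type} (S : Finset Ω)
    (hS : S.Nonempty) (z : Finset (Fin n)) (w : Ω → Finset (Fin n))
    (h1 : ∀ o ∈ S, f (z ∪ w o) ≠ f z)
    (h2 : ∀ x, (#{o ∈ S | x ∈ w o} : ℝ) ≤ t * #S) : QQ f t := by
  refine ⟨S, inferInstance, hS.to_subtype, z, fun o => w o, fun o => h1 o o.2, fun x => ?_⟩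
  have e : #{o : S | x ∈ w o} = #{o ∈ S | x ∈ w o} := by
    rw [← Finset.card_map (Function.Embedding.subtype _)]
    congr 1
    ext o
    simp [and_comm]
  rw [e, Fintype.card_coe]
  exact h2 x

/-- Elements that lie in two of the sampled blocks. -/
def uu {n k : ℕ} {Ω : Type} (w : Ω → Finset (Fin n)) (o : Fin k → Ω) : Finset (Fin n) :=
  {x | ∃ i j, i ≠ j ∧ x ∈ w (o i) ∧ x ∈ w (o j)}

lemma uu_marg {n k : ℕ} {Ω : Type} [Fintype Ω] (w : Ω → Finset (Fin n)) (t : ℝ)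
    (ht : 0 ≤ t) (x : Fin n) (hx : (#{o | x ∈ w o} : ℝ) ≤ t * Fintype.card Ω) :
    (#{o : Fin k → Ω | x ∈ uu w o} : ℝ) ≤ k^2 * t^2 * (Fintype.card Ω)^k := by
  classical
  set D : Finset Ω := {o | x ∈ w o} with hD
  let P : Finset (Fin k × Fin k) := {p | p.1 ≠ p.2}
  have hsub : ({o : Fin k → Ω | x ∈ uu w o} : Finset _) ⊆
      P.biUnion (fun p => Fintype.piFinset (fun m => if m = p.1 ∨ m = p.2 then D else univ)) := by
    intro o ho
    simp only [uu, mem_filter, mem_univ, true_and] at ho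
    obtain ⟨i, j, hij, h1, h2⟩ := ho
    simp only [mem_biUnion, Fintype.mem_piFinset]
    refine ⟨(i, j), by simp [P, hij], fun m => ?_⟩
    by_cases hm : m = i ∨ m = j
    · simp only [hm, if_true]
      rcases hm with rfl | rfl <;> simp [hD, h1, h2]
    · simp [hm]
  have hcard : (#{o : Fin k → Ω | x ∈ uu w o} : ℝ) ≤
      ∑ p ∈ P, (#(Fintype.piFinset (fun m => if m = p.1 ∨ m = p.2 then D else univ)) : ℝ) := by
    exact_mod_cast (card_le_card hsub).trans card_biUnion_le
  refine hcard.trans ?_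
  have hterm : ∀ p ∈ P, (#(Fintype.piFinset (fun m => if m = p.1 ∨ m = p.2 then D else univ)) : ℝ)
      ≤ t^2 * (Fintype.card Ω)^k := by
    intro p hp
    have hp : p.1 ≠ p.2 := by simpa [P] using hp
    rw [Fintype.card_piFinset]
    push_cast
    have : ∀ m ∈ (univ : Finset (Fin k)), (#(if m = p.1 ∨ m = p.2 then D else univ) : ℝ) ≤
        (if m ∈ ({p.1, p.2} : Finset _) then t else 1) * Fintype.card Ω := by
      intro m _
      by_cases hm : m = p.1 ∨ m = p.2
      · simpa [hm] using hx
      · simp [hm]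
    refine (Finset.prod_le_prod (fun _ _ => by positivity) this).trans ?_
    rw [Finset.prod_mul_distrib, Finset.prod_ite_mem, Finset.prod_const]
    simp [card_pair hp]
  refine (Finset.sum_le_card_nsmul _ _ _ hterm).trans ?_
  rw [nsmul_eq_mul, mul_assoc]
  refine mul_le_mul_of_nonneg_right ?_ (by positivity)
  have : #P ≤ k * k := by
    refine (card_le_univ P).trans ?_
    simp
  rw [sq]
  exact_mod_cast this

lemma uu_bad {n k : ℕ} {Ω : Type} [Fintype Ω] (f : Finset (Fin n) → ℝ)
    (w : Ω → Finset (Fin n)) (t : ℝ)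
    (ht : 0 ≤ t) (hx : ∀ x, (#{o | x ∈ w o} : ℝ) ≤ t * Fintype.card Ω)
    (hk : 16 * (k:ℝ)^2 * t ≤ 1) (hQ : ¬ QQ f (t/2)) (z : Finset (Fin n)) :
    (#{o : Fin k → Ω | f (z ∪ uu w o) ≠ f z} : ℝ) ≤ (Fintype.card Ω)^k / 8 := by
  classical
  by_contra hcon
  push Not at hcon
  apply hQ
  set S : Finset (Fin k → Ω) := {o : Fin k → Ω | f (z ∪ uu w o) ≠ f z} with hS
  have hSpos : (0:ℝ) < #S := lt_of_le_of_lt (by positivity) hcon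
  refine QQ_of_finset f (t/2) S (card_pos.1 (by exact_mod_cast hSpos)) z (uu w) ?_ ?_
  · intro o ho
    exact (mem_filter.1 ho).2
  · intro x
    have h1 := uu_marg (k := k) w t ht x (hx x)
    have h2 : (#{o ∈ S | x ∈ uu w o} : ℝ) ≤ #{o : Fin k → Ω | x ∈ uu w o} := by
      exact_mod_cast card_le_card (filter_subset_filter _ (subset_univ _))
    refine (h2.trans h1).trans ?_
    have h3 : (k:ℝ)^2 * t^2 * (Fintype.card Ω)^k ≤ (k:ℝ)^2 * t^2 * (8 * #S) :=
      mul_le_mul_of_nonneg_left (by linarith) (by positivity)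
    refine h3.trans ?_
    have : 16 * (k:ℝ)^2 * t * (t * #S) ≤ 1 * (t * #S) :=
      mul_le_mul_of_nonneg_right hk (by positivity)
    nlinarith

lemma uu_insert {n k : ℕ} {Ω : Type} (w : Ω → Finset (Fin n)) (i : Fin (k+1)) (a : Ω)
    (o : Fin k → Ω) :
    w a ∪ uu w (Fin.insertNth (α := fun _ => Ω) i a o) = w a ∪ uu w o := by
  ext x
  by_cases hx : x ∈ w a
  · simp [hx]
  simp only [mem_union, hx, false_or, uu, mem_filter, mem_univ, true_and]
  constructor
  · rintro ⟨p, q, hpq, hp, hq⟩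
    rcases Fin.eq_self_or_eq_succAbove i p with rfl | ⟨p', rfl⟩
    · simp [hx] at hp
    rcases Fin.eq_self_or_eq_succAbove i q with rfl | ⟨q', rfl⟩
    · simp [hx] at hq
    simp only [Fin.insertNth_apply_succAbove] at hp hq
    exact ⟨p', q', fun h => hpq (by rw [h]), hp, hq⟩
  · rintro ⟨p, q, hpq, hp, hq⟩
    refine ⟨i.succAbove p, i.succAbove q, fun h => hpq (Fin.succAbove_right_injective h), ?_, ?_⟩ <;>
    simpa

lemma uu_bad_i {n k : ℕ} {Ω : Type} [Fintype Ω] (f : Finset (Fin n) → ℝ)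
    (w : Ω → Finset (Fin n)) (t : ℝ)
    (ht : 0 ≤ t) (hx : ∀ x, (#{o | x ∈ w o} : ℝ) ≤ t * Fintype.card Ω)
    (hk : 16 * (k:ℝ)^2 * t ≤ 1) (hQ : ¬ QQ f (t/2)) (z : Finset (Fin n)) (i : Fin (k+1)) :
    (#{o : Fin (k+1) → Ω | f (z ∪ w (o i) ∪ uu w o) ≠ f (z ∪ w (o i))} : ℝ)
      ≤ (Fintype.card Ω)^(k+1) / 8 := by
  classical
  rw [Finset.card_filter]
  push_cast
  rw [← Equiv.sum_comp (Fin.insertNthEquiv (fun _ => Ω) i), Fintype.sum_prod_type]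
  have : ∀ a ∈ (univ : Finset Ω), (∑ o : Fin k → Ω,
      if f (z ∪ w ((Fin.insertNthEquiv (fun _ => Ω) i (a, o)) i) ∪ uu w (Fin.insertNthEquiv (fun _ => Ω) i (a, o)))
        ≠ f (z ∪ w ((Fin.insertNthEquiv (fun _ => Ω) i (a, o)) i)) then (1:ℝ) else 0)
        ≤ (Fintype.card Ω)^k / 8 := by
    intro a _
    have h1 := uu_bad f w t ht hx hk hQ (z ∪ w a)
    rw [Finset.card_filter] at h1
    push_cast at h1
    refine le_trans (le_of_eq ?_) h1
    apply Finset.sum_congr rfl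
    intro o _
    simp only [Fin.insertNthEquiv_apply, Fin.insertNth_apply_same]
    have e : w a ∪ uu w (Fin.insertNthEquiv (fun _ => Ω) i (a, o)) = w a ∪ uu w o :=
      uu_insert w i a o
    rw [union_assoc z, e, ← union_assoc]
  refine (Finset.sum_le_card_nsmul _ _ _ this).trans (le_of_eq ?_)
  rw [nsmul_eq_mul, card_univ]
  ring

lemma exists_good {n k : ℕ} {Ω : Type} [Fintype Ω] [Nonempty Ω] (f : Finset (Fin n) → ℝ)
    (w : Ω → Finset (Fin n)) (t : ℝ)
    (ht : 0 ≤ t) (hx : ∀ x, (#{o | x ∈ w o} : ℝ) ≤ t * Fintype.card Ω)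
    (hk : 16 * ((k+1:ℕ):ℝ)^2 * t ≤ 1) (hQ : ¬ QQ f (t/2)) (z : Finset (Fin n)) :
    ∃ o : Fin (k+1) → Ω, f (z ∪ uu w o) = f z ∧
      4 * #{i | f (z ∪ w (o i) ∪ uu w o) ≠ f (z ∪ w (o i))} ≤ k + 1 := by
  classical
  by_contra hcon
  push Not at hcon
  have hk' : 16 * (k:ℝ)^2 * t ≤ 1 := by
    refine le_trans ?_ hk
    push_cast
    gcongr
    linarith
  have h0 := uu_bad f w t ht hx hk hQ z
  have hi := uu_bad_i f w t ht hx hk' hQ z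
  set T : ℝ := (Fintype.card Ω : ℝ)^(k+1) with hT
  have hTpos : 0 < T := by
    have : 0 < Fintype.card Ω := Fintype.card_pos
    positivity
  have hlow : ∀ o ∈ (univ : Finset (Fin (k+1) → Ω)), ((k:ℝ)+1)/4 <
      ((k:ℝ)+1) * (if f (z ∪ uu w o) ≠ f z then 1 else 0) +
      ∑ i, (if f (z ∪ w (o i) ∪ uu w o) ≠ f (z ∪ w (o i)) then (1:ℝ) else 0) := by
    intro o _
    by_cases h : f (z ∪ uu w o) = f z
    · have h2 := hcon o h
      rw [Finset.card_filter] at h2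
      have h3 : ((k:ℝ)+1) < 4 * ∑ i, (if f (z ∪ w (o i) ∪ uu w o) ≠ f (z ∪ w (o i)) then (1:ℝ) else 0) := by
        exact_mod_cast h2
      simp only [h, ne_eq, not_true_eq_false, if_false, mul_zero, zero_add]
      simp only [ne_eq] at h3
      linarith
    · have h3 : 0 ≤ ∑ i, (if f (z ∪ w (o i) ∪ uu w o) ≠ f (z ∪ w (o i)) then (1:ℝ) else 0) :=
        Finset.sum_nonneg fun i _ => by split_ifs <;> norm_num
      rw [if_pos h]
      have : (0:ℝ) ≤ k := by positivity
      linarith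
  have hsum := Finset.sum_lt_sum_of_nonempty univ_nonempty hlow
  rw [Finset.sum_add_distrib, ← Finset.mul_sum, Finset.sum_comm] at hsum
  rw [Finset.card_filter] at h0
  push_cast at h0
  have h4 : ∑ i, ∑ o : Fin (k+1) → Ω, (if f (z ∪ w (o i) ∪ uu w o) ≠ f (z ∪ w (o i)) then (1:ℝ) else 0)
      ≤ ((k:ℝ)+1) * (T/8) := by
    refine (Finset.sum_le_card_nsmul _ _ (T/8) ?_).trans (le_of_eq ?_)
    · intro i _
      have := hi i
      rw [Finset.card_filter] at this
      push_cast at this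
      exact this
    · simp
  have h5 : ((k:ℝ)+1) * ∑ o : Fin (k+1) → Ω, (if f (z ∪ uu w o) ≠ f z then (1:ℝ) else 0)
      ≤ ((k:ℝ)+1) * (T/8) := mul_le_mul_of_nonneg_left h0 (by positivity)
  have h6 : ∑ o : Fin (k+1) → Ω, ((k:ℝ)+1)/4 = T * (((k:ℝ)+1)/4) := by
    simp [hT]
  rw [h6] at hsum
  linarith

lemma QQ_halve {n : ℕ} (f : Finset (Fin n) → ℝ) (M : Finset (Finset (Fin n)))
    (c : Finset (Fin n) → ℝ) (d : ℕ) (hd : 1 ≤ d) (hM : 2 * #M < 2 ^ d)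
    (hf : ∀ x, f x = ∑ s ∈ M, if s ⊆ x then c s else 0)
    (h01 : ∀ x, f x = 0 ∨ f x = 1) (t : ℝ) (ht : 0 ≤ t) (htd : 1936 * (d:ℝ)^4 * t ≤ 1)
    (h : QQ f t) : QQ f (t/2) := by
  classical
  by_contra hQ
  obtain ⟨Ω, _, _, z, w, hw, hx⟩ := h
  obtain ⟨k, hk⟩ : ∃ k, 11 * d^2 = k + 1 := ⟨11 * d^2 - 1, by
    have : 0 < d^2 := by positivity
    omega⟩
  have hk16 : 16 * ((k+1:ℕ):ℝ)^2 * t ≤ 1 := by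
    rw [← hk]; push_cast; refine le_trans (le_of_eq ?_) htd; ring
  obtain ⟨o, ho, hbad⟩ := exists_good (k := k) f w t ht hx hk16 hQ z
  set Bd : Finset (Fin (k+1)) := {i | f (z ∪ w (o i) ∪ uu w o) ≠ f (z ∪ w (o i))} with hBd
  have hb := mbs_bound f M c d hd hM hf h01 (z ∪ uu w o) (Bdᶜ) (fun i => w (o i)) ?_ ?_
  · have h1 := card_compl Bd
    have h2 := card_le_univ Bd
    simp only [Fintype.card_fin] at h1 h2
    have : 0 < d^2 := by positivity
    omega
  · intro i _ j _ hij x hx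
    rw [mem_inter] at hx
    exact mem_union_right _ (by simp only [uu, mem_filter, mem_univ, true_and]; exact ⟨i, j, hij, hx.1, hx.2⟩)
  · intro i hi
    have hi : f (z ∪ w (o i) ∪ uu w o) = f (z ∪ w (o i)) := by simpa [hBd] using hi
    rw [ho, union_right_comm, hi]
    exact hw _

lemma not_QQ {n : ℕ} (f : Finset (Fin n) → ℝ) (M : Finset (Finset (Fin n)))
    (c : Finset (Fin n) → ℝ) (d : ℕ) (hd : 1 ≤ d) (hM : 2 * #M < 2 ^ d)
    (hf : ∀ x, f x = ∑ s ∈ M, if s ⊆ x then c s else 0)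
    (h01 : ∀ x, f x = 0 ∨ f x = 1) (t : ℝ) (ht : 0 ≤ t) (htd : 1936 * (d:ℝ)^4 * t ≤ 1) :
    ¬ QQ f t := by
  intro h
  have hall : ∀ m : ℕ, QQ f (t / 2^m) := by
    intro m
    induction m with
    | zero => simpa using h
    | succ m ih =>
      have := QQ_halve f M c d hd hM hf h01 (t/2^m) (by positivity) (by
        refine le_trans ?_ htd
        gcongr
        exact div_le_self ht (one_le_pow₀ (by norm_num))) ih
      rwa [div_div, ← pow_succ] at this
  obtain ⟨m, hm⟩ := pow_unbounded_of_one_lt (n * t) (one_lt_two : (1:ℝ) < 2)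
  obtain ⟨Ω, _, _, z, w, hw, hx⟩ := hall m
  have h1 : ∀ o ∈ (univ : Finset Ω), 1 ≤ ∑ x, (if x ∈ w o then (1:ℝ) else 0) := by
    intro o _
    have : (w o).Nonempty := by
      rw [nonempty_iff_ne_empty]
      intro h
      exact hw o (by rw [h, union_empty])
    simp
    exact this
  have h2 := Finset.card_nsmul_le_sum _ _ _ h1
  rw [Finset.sum_comm] at h2
  have h3 : ∑ x, ∑ o, (if x ∈ w o then (1:ℝ) else 0) ≤ n * (t / 2^m * Fintype.card Ω) := by
    refine (Finset.sum_le_card_nsmul _ _ (t / 2^m * Fintype.card Ω) ?_).trans (le_of_eq ?_)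
    · intro x _
      have := hx x
      rw [Finset.card_filter] at this
      push_cast at this
      exact this
    · simp
  have hpos : (0:ℝ) < Fintype.card Ω := by exact_mod_cast Fintype.card_pos
  rw [nsmul_eq_mul, mul_one, card_univ] at h2
  have h4 : n * (t / 2^m * Fintype.card Ω) = (n * t / 2^m) * Fintype.card Ω := by ring
  have h5 : n * t / 2^m < 1 := by rw [div_lt_one (by positivity)]; exact hm
  nlinarith

lemma greedy {α : Type*} [DecidableEq α] (F : Finset (Finset α)) (δ : ℝ) (hδ1 : δ ≤ 1)
    (h : ∀ F' ⊆ F, F'.Nonempty → ∃ x, δ * #F' ≤ #{s ∈ F' | x ∈ s}) (m : ℕ) :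
    ∀ F' ⊆ F, #F' * (1 - δ)^m < 1 → ∃ H : Finset α, (∀ s ∈ F', (H ∩ s).Nonempty) ∧ #H ≤ m := by
  induction m with
  | zero =>
    intro F' _ hc
    have : #F' = 0 := by
      have : (#F' : ℝ) < 1 := by simpa using hc
      have : #F' < 1 := by exact_mod_cast this
      omega
    rw [card_eq_zero] at this
    exact ⟨∅, by simp [this], by simp⟩
  | succ m ih =>
    intro F' hF' hc
    rcases F'.eq_empty_or_nonempty with rfl | hne
    · exact ⟨∅, by simp, by simp⟩
    obtain ⟨x, hx⟩ := h F' hF' hne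
    have hadd : (#{s ∈ F' | x ∈ s} : ℝ) + #{s ∈ F' | x ∉ s} = #F' := by
      exact_mod_cast card_filter_add_card_filter_not (s := F') (fun s => x ∈ s)
    have hle : (#{s ∈ F' | x ∉ s} : ℝ) ≤ #F' * (1 - δ) := by linarith
    obtain ⟨H, hH, hHc⟩ := ih {s ∈ F' | x ∉ s} ((filter_subset _ _).trans hF') (by
      refine lt_of_le_of_lt ?_ hc
      rw [pow_succ', ← mul_assoc]
      exact mul_le_mul_of_nonneg_right hle (pow_nonneg (by linarith) _))
    refine ⟨insert x H, fun s hs => ?_, (card_insert_le _ _).trans (by omega)⟩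
    by_cases hxs : x ∈ s
    · exact ⟨x, by simp [hxs]⟩
    · obtain ⟨y, hy⟩ := hH s (by simp [hs, hxs])
      rw [mem_inter] at hy
      exact ⟨y, by simp [hy.1, hy.2]⟩

lemma mobius {n : ℕ} (f : Finset (Fin n) → ℝ) (x : Finset (Fin n)) :
    f x = ∑ s ∈ x.powerset, coeff f s := by
  have h1 : ∀ s ∈ x.powerset, coeff f s =
      ∑ t ∈ x.powerset, f t * (-1)^(#t) * (if t ⊆ s then (-1:ℝ)^(#s) * 1 ^ #(x \ s) else 0) := by
    intro s hs
    rw [coeff]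
    have hs := mem_powerset.1 hs
    rw [← Finset.sum_subset (powerset_mono.2 hs)]
    · apply Finset.sum_congr rfl
      intro t ht
      have ht := mem_powerset.1 ht
      rw [if_pos ht]
      obtain ⟨a, ha⟩ := Nat.exists_eq_add_of_le (card_le_card ht)
      rw [ha, Nat.add_sub_cancel_left, pow_add]
      have : ((-1:ℝ)^(#t)) * ((-1:ℝ)^(#t)) = 1 := by rw [← mul_pow]; simp
      rw [one_pow]
      linear_combination (-(-1:ℝ)^a * f t) * this
    · intro t _ ht
      rw [mem_powerset] at ht
      simp [ht]
  rw [Finset.sum_congr rfl h1, Finset.sum_comm]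
  rw [Finset.sum_eq_single x]
  · rw [← Finset.mul_sum, sum_between x x subset_rfl]
    have : ((-1:ℝ)^(#x)) * ((-1:ℝ)^(#x)) = 1 := by rw [← mul_pow]; simp
    simp
    linear_combination (-f x) * this
  · intro t ht htx
    have ht := mem_powerset.1 ht
    rw [← Finset.mul_sum, sum_between t x ht]
    have : #(x \ t) ≠ 0 := by
      rw [Ne, card_eq_zero, sdiff_eq_empty_iff_subset]
      exact fun h => htx (subset_antisymm ht h)
    simp [this]
  · intro h; simp at h

/-- There is an absolute constant `C > 0` such that any boolean function `f` with
sparsity `r ≥ 2` admits a hitting set for `mon f` of size at most `C·(log₂ r)^5`. -/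
theorem stmt0 :
    ∃ C : ℝ, 0 < C ∧
      ∀ (n : ℕ) (f : Finset (Fin n) → ℝ),
        (∀ x, f x = 0 ∨ f x = 1) →
        2 ≤ sparsity f →
        ∃ H : Finset (Fin n),
          (∀ s ∈ mon f, (H ∩ s).Nonempty) ∧
          (H.card : ℝ) ≤ C * (Real.logb 2 (sparsity f)) ^ 5 := by
  classical
  refine ⟨200000, by norm_num, ?_⟩
  intro n f h01 hr
  set r := sparsity f with hrdef
  let M : Finset (Finset (Fin n)) := {s | coeff f s ≠ 0}
  have hMr : #M = r := by
    rw [hrdef, sparsity, ← Set.ncard_coe_finset]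
    congr 1
    ext s; simp [M]
  have hf : ∀ x, f x = ∑ s ∈ M, if s ⊆ x then coeff f s else 0 := by
    intro x
    rw [mobius f x, Finset.sum_filter]
    have e : x.powerset = ({s | s ⊆ x} : Finset (Finset (Fin n))) := by ext s; simp
    rw [e, Finset.sum_filter]
    apply Finset.sum_congr rfl
    intro s _
    by_cases h : coeff f s = 0 <;> simp [h]
  set L := Real.logb 2 r with hL
  have hrpos : (0:ℝ) < r := by exact_mod_cast (by omega : 0 < r)
  have hL1 : 1 ≤ L := by
    rw [hL, Real.le_logb_iff_rpow_le (by norm_num) hrpos]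
    simp; exact_mod_cast hr
  set d := Nat.log 2 r + 2 with hd
  have hdL : (d:ℝ) ≤ 3 * L := by
    have h1 : (Nat.log 2 r : ℝ) ≤ L := by exact_mod_cast Real.natLog_le_logb r 2
    rw [hd]; push_cast; linarith
  have hM : 2 * #M < 2 ^ d := by
    rw [hMr, hd, show Nat.log 2 r + 2 = (Nat.log 2 r).succ + 1 by omega, pow_succ]
    have := Nat.lt_pow_succ_log_self (b := 2) (by norm_num) r
    omega
  have hd1 : (1:ℝ) ≤ d := by rw [hd]; push_cast; linarith [(Nat.cast_nonneg (Nat.log 2 r) : (0:ℝ) ≤ _)]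
  set t : ℝ := 1 / (1936 * (d:ℝ)^4) with ht
  have hd4 : 1 ≤ (d:ℝ)^4 := one_le_pow₀ hd1
  have htpos : 0 < t := by positivity
  have ht1 : t ≤ 1 := by rw [ht, div_le_one (by positivity)]; linarith
  have hnQ : ¬ QQ f t := not_QQ f M (coeff f) d (by omega) hM hf h01 t htpos.le (by
    rw [ht]; exact le_of_eq (by field_simp))
  let F : Finset (Finset (Fin n)) := {s ∈ M | f s ≠ f ∅}
  have hFr : (#F : ℝ) ≤ r := by
    rw [← hMr]; exact_mod_cast card_filter_le _ _
  have hgr : ∀ F' ⊆ F, F'.Nonempty → ∃ x, t * #F' ≤ #{s ∈ F' | x ∈ s} := by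
    intro F' hF' hne
    by_contra hcon
    push Not at hcon
    apply hnQ
    refine QQ_of_finset f t F' hne ∅ id ?_ (fun x => (hcon x).le)
    intro o ho
    simpa using (mem_filter.1 (hF' ho)).2
  set m : ℕ := ⌊Real.log r / t⌋₊ + 1 with hm
  have hlog0 : 0 ≤ Real.log r := Real.log_nonneg (by exact_mod_cast (by omega : 1 ≤ r))
  have hmt : Real.log r < t * m := by
    have := Nat.lt_floor_add_one (Real.log r / t)
    rw [div_lt_iff₀ htpos] at this
    rw [hm]; push_cast; linarith
  have hlt : #F * (1 - t)^m < 1 := by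
    have h1 : (1 - t)^m ≤ Real.exp (-(t * m)) := by
      have : (1 - t) ≤ Real.exp (-t) := by linarith [Real.add_one_le_exp (-t)]
      refine (pow_le_pow_left₀ (by linarith) this m).trans (le_of_eq ?_)
      rw [← Real.exp_nat_mul]; congr 1; ring
    have h2 : Real.exp (-(t*m)) < Real.exp (-Real.log r) := Real.exp_lt_exp.2 (by linarith)
    rw [Real.exp_neg (Real.log r), Real.exp_log hrpos] at h2
    calc #F * (1 - t)^m ≤ r * (1-t)^m :=
          mul_le_mul_of_nonneg_right hFr (pow_nonneg (by linarith) _)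
      _ < r * (r:ℝ)⁻¹ := mul_lt_mul_of_pos_left (h1.trans_lt h2) hrpos
      _ = 1 := mul_inv_cancel₀ hrpos.ne'
  obtain ⟨H, hH, hHm⟩ := greedy F t ht1 hgr m F subset_rfl hlt
  refine ⟨H, ?_, ?_⟩
  · intro s hs
    let A : Finset (Finset (Fin n)) := {u | u ⊆ s ∧ coeff f u ≠ 0 ∧ u ≠ ∅}
    have hA : A.Nonempty := ⟨s, by simp only [A, mem_filter, mem_univ, true_and]; exact ⟨subset_rfl, hs.1, hs.2⟩⟩
    obtain ⟨u, huA, hmin⟩ := A.exists_min_image card hA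
    have hu : u ⊆ s ∧ coeff f u ≠ 0 ∧ u ≠ ∅ := by simpa [A] using huA
    have hfu : f u = coeff f ∅ + coeff f u := by
      rw [mobius f u, ← Finset.sum_pair (Ne.symm hu.2.2)]
      symm
      apply Finset.sum_subset
      · intro v hv; simp at hv; rcases hv with rfl | rfl <;> simp
      · intro v hv hv2
        by_contra hc
        have hv := mem_powerset.1 hv
        simp at hv2
        have := hmin v (by simp only [A, mem_filter, mem_univ, true_and]; exact ⟨hv.trans hu.1, hc, hv2.1⟩)
        exact hv2.2 (Finset.eq_of_subset_of_card_le hv this)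
    have hf0 : f ∅ = coeff f ∅ := by rw [mobius f ∅]; simp
    have huF : u ∈ F := by
      simp only [F, M, mem_filter, mem_univ, true_and]
      refine ⟨hu.2.1, ?_⟩
      rw [hfu, hf0]
      simpa using hu.2.1
    exact (hH u huF).mono (inter_subset_inter_left hu.1)
  · have h1 : (#H : ℝ) ≤ m := by exact_mod_cast hHm
    have h2 : (m:ℝ) ≤ Real.log r / t + 1 := by
      rw [hm]; push_cast
      linarith [Nat.floor_le (div_nonneg hlog0 htpos.le)]
    have h3 : Real.log r ≤ L := by
      have : Real.log r = L * Real.log 2 := by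
        rw [hL, Real.logb, div_mul_cancel₀]
        exact (Real.log_pos (by norm_num)).ne'
      have h4 := Real.log_two_lt_d9
      have h5 := Real.log_pos (by norm_num : (1:ℝ) < 2)
      nlinarith
    have h4 : Real.log r / t = Real.log r * (1936 * (d:ℝ)^4) := by
      rw [ht]; field_simp
    have h5 : (d:ℝ)^4 ≤ (3 * L)^4 := pow_le_pow_left₀ (by linarith) hdL 4
    have h6 : Real.log r * (1936 * (d:ℝ)^4) ≤ L * (1936 * (3 * L)^4) :=
      mul_le_mul h3 (by linarith) (by positivity) (by linarith)
    have h7 : 1 ≤ L^5 := one_le_pow₀ hL1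
    have h8 : L * (1936 * (3 * L)^4) = 156816 * L^5 := by ring
    linarith
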